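/- For every positive integer n ≤ 4 there exist division rings F and G and a tight ring embedding φ : F → Mₙ(G). -/

import Mathlib

/-- `φ : F → Mₙ(α)` is `a`-tight: every possible upper-right `a × (n+1-a)` block
(rows `1,…,a`, columns `a,…,n`, one-indexed) is realized by some element of `F`. -/
def ATight {n : ℕ} {F α : Type*} (φ : F → Matrix (Fin n) (Fin n) α) (a : ℕ) : Prop :=
  ∀ g : Matrix (Fin n) (Fin n) α, ∃ x : F, ∀ i j : Fin n,
    (i : ℕ) < a → a ≤ (j : ℕ) + 1 → φ x i j = g i j

/-- A pair of division rings `F`, `G` together with a tight embedding `F → Mₙ(G)`. -/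
structure TightPair (n : ℕ) : Type 1 where
  F : Type
  G : Type
  [instF : DivisionRing F]
  [instG : DivisionRing G]
  φ : F →+* Matrix (Fin n) (Fin n) G
  injφ : Function.Injective φ
  tight : ∀ a : ℕ, 1 ≤ a → a ≤ n → ATight ⇑φ a

/-!
Let `K` be a division ring generated, up to completion, by pairs `aᵢ, bᵢ` with `bᵢ aᵢ = ζ aᵢ bᵢ`,
where `ζ` is a primitive `n`-th root of unity, distinct pairs commute, and every `bᵢⁿ` is central.
Put `u₀ = b₀` and let `u_{N+1}` be the conjugate of `b_{N+1}` by `1 - u_N a_{N+1}`. Conjugation by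
`u_N` has order `n`, and its fixed rings in the rings of elements that involve only the pairs
`0, …, N` increase with `N`. Their union is a division ring `G` over which `1, a₀, …, a₀ⁿ⁻¹` is a
basis of `K`, with coordinates given by traces of inner automorphisms, and right multiplication
embeds `K` into `Mₙ(G)`.

Prescribing one row or one column is then linear algebra over `G`. For `a = 2`, conjugation by
`1 - u_N a_{N+1}` carries everything of level `N` into `G`, so that two elements span it as a
right vector space over `G`; by the exchange lemma the second row can then be corrected without
changing the first. For `a = n - 1` the same argument applies to the last two columns. If `n ≤ 4`,
every `a` is one of `1, 2, n - 1, n`.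

The ring `K` consists of Mal'cev–Neumann series over a quantum torus of infinite rank.
-/

open Finset

lemma semiconjBy_mul_mul_inv₀ {G₀ : Type*} [GroupWithZero G₀] {q : G₀} (hq : q ≠ 0) (x : G₀) :
    SemiconjBy q x (q * x * q⁻¹) := by
  rw [SemiconjBy, inv_mul_cancel_right₀ hq]

lemma semiconjBy_pow_smul {k A : Type*} [CommSemiring k] [Semiring A] [Algebra k A] {u x : A}
    {r : k} (h : SemiconjBy u x (r • x)) (m : ℕ) : SemiconjBy (u ^ m) x (r ^ m • x) := by
  induction m with
  | zero => simp
  | succ m ih =>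
    have ih' : SemiconjBy (u ^ m) (r • x) (r ^ (m + 1) • x) := by
      simp only [SemiconjBy, mul_smul_comm, ih.eq, pow_succ', mul_smul, smul_mul_assoc]
    exact pow_succ u m ▸ ih'.mul_left h

section ConjTrace

variable {k K : Type*} [Field k] [DivisionRing K] [Algebra k K] {n : ℕ} {ζ : k} {c u x : K}

/-- The trace `x ↦ ∑_{m < n} uᵐ x u⁻ᵐ` of the inner automorphism defined by `u`. When `uⁿ` is
central it takes its values in the centralizer of `u`. -/
def conjTrace (n : ℕ) (u : K) : K →+ K where
  toFun x := ∑ m ∈ range n, u ^ m * x * (u ^ m)⁻¹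
  map_zero' := by simp
  map_add' x y := by simp only [mul_add, add_mul, sum_add_distrib]

lemma conjTrace_apply (n : ℕ) (u x : K) :
    conjTrace n u x = ∑ m ∈ range n, u ^ m * x * (u ^ m)⁻¹ := rfl

lemma conjTrace_mul_left (h : Commute u c) (x : K) :
    conjTrace n u (c * x) = c * conjTrace n u x := by
  simp only [conjTrace_apply, mul_sum, ← mul_assoc, (h.pow_left _).eq]

lemma conjTrace_mul_right (h : Commute u c) (x : K) :
    conjTrace n u (x * c) = conjTrace n u x * c := by
  simp only [conjTrace_apply, sum_mul, mul_assoc, ((h.pow_left _).inv_left₀).eq]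

lemma conjTrace_mem {S : Subfield K} (hu : u ∈ S) (hx : x ∈ S) : conjTrace n u x ∈ S := by
  rw [conjTrace_apply]
  exact sum_mem fun m _ => mul_mem (mul_mem (pow_mem hu m) hx) (inv_mem (pow_mem hu m))

lemma semiconjBy_conjTrace {q u' x' : K} (hu : SemiconjBy q u u') (hx : SemiconjBy q x x') :
    SemiconjBy q (conjTrace n u x) (conjTrace n u' x') := by
  simp only [SemiconjBy, conjTrace_apply, mul_sum, sum_mul]
  exact sum_congr rfl fun m _ =>
    (((hu.pow_right m).mul_right hx).mul_right (hu.pow_right m).inv_right₀).eq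

lemma commute_self_conjTrace (h0 : u ≠ 0) (hx : Commute (u ^ n) x) :
    Commute u (conjTrace n u x) := by
  have hlast : u ^ n * x * (u ^ n)⁻¹ = x := by
    rw [hx.eq, mul_inv_cancel_right₀ (pow_ne_zero n h0)]
  have hshift : u * conjTrace n u x * u⁻¹ = ∑ m ∈ range n, u ^ (m + 1) * x * (u ^ (m + 1))⁻¹ := by
    simp only [conjTrace_apply, mul_sum, sum_mul, pow_succ', mul_inv_rev, mul_assoc]
  have hconj : u * conjTrace n u x * u⁻¹ = conjTrace n u x := by
    have htel := sum_range_succ' (fun m => u ^ m * x * (u ^ m)⁻¹) n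
    rw [sum_range_succ, hlast, pow_zero, one_mul, inv_one, mul_one] at htel
    rw [hshift, conjTrace_apply, add_right_cancel htel]
  exact ((eq_mul_inv_iff_mul_eq₀ h0).1 hconj.symm).symm

lemma conjTrace_of_semiconjBy {r : k} (h0 : u ≠ 0) (h : SemiconjBy u x (r • x)) (n : ℕ) :
    conjTrace n u x = (∑ m ∈ range n, r ^ m) • x := by
  rw [conjTrace_apply, sum_smul]
  exact sum_congr rfl fun m _ => by
    rw [(semiconjBy_pow_smul h m).eq, mul_inv_cancel_right₀ (pow_ne_zero m h0)]

lemma semiconjBy_smul_zpow (h : SemiconjBy u x (ζ • x)) (j : ℤ) :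
    SemiconjBy u (x ^ j) (ζ ^ j • x ^ j) := by
  have hj := h.zpow_right₀ j
  have hcomm : Commute (algebraMap k K ζ) x := Algebra.commutes ζ x
  rwa [Algebra.smul_def, hcomm.mul_zpow, ← map_zpow₀, ← Algebra.smul_def] at hj

lemma sum_primitiveRoot_zpow_sub_pow (hζ : IsPrimitiveRoot ζ n) {i j : ℕ} (hi : i < n)
    (hj : j < n) : ∑ m ∈ range n, (ζ ^ ((i : ℤ) - j)) ^ m = if i = j then (n : k) else 0 := by
  split_ifs with hij
  · simp [hij]
  · have hne : ζ ^ ((i : ℤ) - j) ≠ 1 := fun h1 => hij <| by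
      have hdvd := (hζ.zpow_eq_one_iff_dvd _).1 h1
      have h0 := Int.eq_zero_of_abs_lt_dvd hdvd (by rw [abs_lt]; omega)
      omega
    have hpow : (ζ ^ ((i : ℤ) - j)) ^ n = 1 := by
      rw [← zpow_natCast, zpow_comm, zpow_natCast, hζ.pow_eq_one, one_zpow]
    have hgeom := mul_neg_geom_sum (ζ ^ ((i : ℤ) - j)) n
    rw [hpow, sub_self] at hgeom
    exact (mul_eq_zero.1 hgeom).resolve_left (sub_ne_zero.2 hne.symm)

lemma conjTrace_zpow_sub (hζ : IsPrimitiveRoot ζ n) (h0 : u ≠ 0) (h : SemiconjBy u x (ζ • x))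
    {i j : ℕ} (hi : i < n) (hj : j < n) :
    conjTrace n u (x ^ ((i : ℤ) - j)) = if i = j then (n : K) else 0 := by
  rw [conjTrace_of_semiconjBy h0 (semiconjBy_smul_zpow h _),
    sum_primitiveRoot_zpow_sub_pow hζ hi hj]
  split_ifs with hij
  · simp [hij, Algebra.smul_def]
  · rw [zero_smul]

/-- Dual bases for the trace: the matrices `(uᵐ pᵢ u⁻ᵐ)` and `(uᵐ qⱼ u⁻ᵐ)` are inverse to each
other on one side, hence on both. -/
lemma sum_conjTrace_mul_of_dual [NeZero n] {p q : Fin n → K}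
    (hdual : ∀ i j, conjTrace n u (p i * q j) = if i = j then 1 else 0) (h0 : u ≠ 0) (x : K) :
    ∑ j, conjTrace n u (x * q j) * p j = x := by
  let P : Matrix (Fin n) (Fin n) K := .of fun i m => u ^ (m : ℕ) * p i * (u ^ (m : ℕ))⁻¹
  let Q : Matrix (Fin n) (Fin n) K := .of fun m j => u ^ (m : ℕ) * q j * (u ^ (m : ℕ))⁻¹
  have hsplit (m : ℕ) (y z : K) : u ^ m * (y * z) * (u ^ m)⁻¹ =
      (u ^ m * y * (u ^ m)⁻¹) * (u ^ m * z * (u ^ m)⁻¹) := by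
    simp [mul_assoc, inv_mul_cancel_left₀ (pow_ne_zero m h0)]
  have hPQ : P * Q = 1 := by
    ext i j
    simp only [Matrix.one_apply, ← hdual, conjTrace_apply, sum_range, Matrix.mul_apply, hsplit,
      P, Q, Matrix.of_apply]
  have hQP (m : Fin n) : ∑ j, Q m j * p j = if m = 0 then 1 else 0 := by
    have hQP := congrFun₂ (mul_eq_one_comm.1 hPQ : Q * P = 1) m 0
    simpa [Matrix.mul_apply, P, Matrix.one_apply] using hQP
  calc ∑ j, conjTrace n u (x * q j) * p j
      = ∑ m : Fin n, u ^ (m : ℕ) * x * (u ^ (m : ℕ))⁻¹ * ∑ j, Q m j * p j := by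
        simp only [conjTrace_apply, sum_range, sum_mul, mul_sum, hsplit, Q, Matrix.of_apply,
          mul_assoc]
        exact sum_comm
    _ = x := by simp [hQP]

end ConjTrace

section TraceWeight

variable {k K : Type*} [Field k] [DivisionRing K] [Algebra k K] {n : ℕ} {ζ : k}

/-- For `v θ v⁻¹ = ζ θ` with `ζ` a primitive `n`-th root of unity, the element `w` of the field
generated by `θ` for which the trace under `v` of `θᵐ w` equals `1 - θⁿ` for all `m < n`. -/
def traceWeight (n : ℕ) (θ : K) : K := (n : K)⁻¹ * (1 - θ ^ n) * ∑ s ∈ range n, θ⁻¹ ^ s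

lemma traceWeight_mem {S : Subfield K} {θ : K} (hθ : θ ∈ S) : traceWeight n θ ∈ S :=
  mul_mem (mul_mem (inv_mem (natCast_mem S n)) (sub_mem (one_mem S) (pow_mem hθ n)))
    (sum_mem fun _ _ => pow_mem (inv_mem hθ) _)

lemma commute_traceWeight {c θ : K} (h : Commute c θ) : Commute c (traceWeight n θ) :=
  (((Nat.commute_cast c n).inv_right₀).mul_right
    ((Commute.one_right c).sub_right (h.pow_right n))).mul_right
    (Commute.sum_right _ _ _ fun s _ => h.inv_right₀.pow_right s)

lemma traceWeight_mul_one_sub_inv (n : ℕ) (θ : K) :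
    traceWeight n θ * (1 - θ⁻¹) = (n : K)⁻¹ * (1 - θ ^ n) * (1 - θ⁻¹ ^ n) := by
  rw [traceWeight, mul_assoc, geom_sum_mul_neg]

lemma natCast_ne_zero_of_isPrimitiveRoot [NeZero n] (hζ : IsPrimitiveRoot ζ n) : (n : K) ≠ 0 := by
  have := hζ.neZero'
  rw [← map_natCast (algebraMap k K)]
  exact (map_ne_zero _).2 (NeZero.ne (n : k))

lemma traceWeight_mul_one_sub_inv_ne_zero [NeZero n] (hζ : IsPrimitiveRoot ζ n) {θ : K}
    (hθ : θ ^ n ≠ 1) : traceWeight n θ * (1 - θ⁻¹) ≠ 0 := by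
  rw [traceWeight_mul_one_sub_inv]
  refine mul_ne_zero (mul_ne_zero (inv_ne_zero (natCast_ne_zero_of_isPrimitiveRoot hζ))
    (sub_ne_zero.2 hθ.symm)) (sub_ne_zero.2 fun h => hθ ?_)
  rwa [inv_pow, eq_comm, inv_eq_one] at h

lemma traceWeight_mul_inv_mul_one_sub_inv [NeZero n] (hζ : IsPrimitiveRoot ζ n) {θ : K}
    (hθ : θ ^ n ≠ 1) :
    traceWeight n θ * ((traceWeight n θ * (1 - θ⁻¹))⁻¹ * (1 - θ⁻¹)) = 1 := by
  have h0 := traceWeight_mul_one_sub_inv_ne_zero hζ hθ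
  have hcomm : Commute (traceWeight n θ) (1 - θ⁻¹) := (Commute.one_right _).sub_right
    (commute_traceWeight (Commute.refl θ)).symm.inv_right₀
  rw [hcomm.eq, mul_inv_rev, inv_mul_cancel_right₀ (right_ne_zero_of_mul h0),
    mul_inv_cancel₀ (left_ne_zero_of_mul h0)]

lemma commute_pow_of_semiconjBy (hζ : IsPrimitiveRoot ζ n) {v θ : K}
    (h : SemiconjBy v θ (ζ • θ)) : Commute v (θ ^ n) := by
  have hpow := semiconjBy_smul_zpow h n
  rwa [zpow_natCast, zpow_natCast, hζ.pow_eq_one, one_smul] at hpow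

lemma commute_traceWeight_mul_one_sub_inv (hζ : IsPrimitiveRoot ζ n) {v θ : K}
    (h : SemiconjBy v θ (ζ • θ)) : Commute v (traceWeight n θ * (1 - θ⁻¹)) := by
  have hpow := commute_pow_of_semiconjBy hζ h
  rw [traceWeight_mul_one_sub_inv, inv_pow]
  exact (((Nat.commute_cast v n).inv_right₀).mul_right
    ((Commute.one_right v).sub_right hpow)).mul_right
    ((Commute.one_right v).sub_right hpow.inv_right₀)

lemma conjTrace_pow_mul_traceWeight [NeZero n] (hζ : IsPrimitiveRoot ζ n) {v θ : K} (hv : v ≠ 0)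
    (hθ : θ ≠ 0) (h : SemiconjBy v θ (ζ • θ)) {m : ℕ} (hm : m < n) :
    conjTrace n v (θ ^ m * traceWeight n θ) = 1 - θ ^ n := by
  have hscalar : Commute v ((n : K)⁻¹ * (1 - θ ^ n)) :=
    ((Nat.commute_cast v n).inv_right₀).mul_right
      ((Commute.one_right v).sub_right (commute_pow_of_semiconjBy hζ h))
  have hexpand : θ ^ m * traceWeight n θ =
      (n : K)⁻¹ * (1 - θ ^ n) * ∑ s ∈ range n, θ ^ ((m : ℤ) - s) := by
    have hcomm : Commute (θ ^ m) ((n : K)⁻¹ * (1 - θ ^ n)) :=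
      ((Nat.commute_cast _ n).inv_right₀).mul_right
        ((Commute.one_right _).sub_right ((Commute.refl θ).pow_pow m n))
    rw [traceWeight, ← mul_assoc, hcomm.eq, mul_assoc, mul_sum]
    simp only [zpow_sub₀ hθ, zpow_natCast, inv_pow, div_eq_mul_inv]
  rw [hexpand, conjTrace_mul_left hscalar, map_sum,
    sum_congr rfl fun s hs => conjTrace_zpow_sub hζ hv h hm (mem_range.1 hs),
    sum_ite_eq, if_pos (mem_range.2 hm), ← (Nat.cast_commute n _).eq,
    mul_inv_cancel_left₀ (natCast_ne_zero_of_isPrimitiveRoot hζ)]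

lemma one_sub_ne_zero_of_pow_ne_one {θ : K} (hθ : θ ^ n ≠ 1) : 1 - θ ≠ 0 :=
  sub_ne_zero.2 fun h => hθ (by rw [← h, one_pow])

lemma inv_one_sub_eq_geom_sum {θ : K} (hθ : θ ^ n ≠ 1) :
    (1 - θ)⁻¹ = (1 - θ ^ n)⁻¹ * ∑ m ∈ range n, θ ^ m := by
  rw [eq_comm, inv_mul_eq_iff_eq_mul₀ (sub_ne_zero.2 hθ.symm),
    eq_mul_inv_iff_mul_eq₀ (one_sub_ne_zero_of_pow_ne_one hθ), geom_sum_mul_neg]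

variable {u d v f : K}

lemma commute_mul_conjTrace (hu0 : u ≠ 0) (hud : Commute u d) (hun : ∀ x, Commute (u ^ n) x)
    (hdf : Commute d f) : Commute (u * d) (conjTrace n u f) :=
  (commute_self_conjTrace hu0 (hun f)).mul_left (semiconjBy_conjTrace hud.symm hdf)

/-- Expanding `(1 - u d)⁻¹` as a geometric series in `u d` and moving `f` to the left turns its
terms into the summands `uᵐ f u⁻ᵐ` of the trace under `u`. -/
lemma conjTrace_inv_one_sub_mul [NeZero n] (hζ : IsPrimitiveRoot ζ n) (hu0 : u ≠ 0)
    (hd0 : d ≠ 0) (hv0 : v ≠ 0) (hud : Commute u d) (huv : Commute u v)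
    (hvd : SemiconjBy v d (ζ • d)) (hun : ∀ x, Commute (u ^ n) x) (hne : (u * d) ^ n ≠ 1)
    (hdf : Commute d f) (hvf : Commute v f) :
    conjTrace n v ((1 - u * d)⁻¹ * (f * traceWeight n (u * d))) = conjTrace n u f := by
  set θ := u * d with hθ
  have hvθ : SemiconjBy v θ (ζ • θ) := by
    simpa only [hθ, mul_smul_comm] using SemiconjBy.mul_right huv.symm hvd
  have hvΔ : Commute v (1 - θ ^ n)⁻¹ :=
    ((Commute.one_right v).sub_right (commute_pow_of_semiconjBy hζ hvθ)).inv_right₀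
  have hmove (m : ℕ) : θ ^ m * f = u ^ m * f * (u ^ m)⁻¹ * θ ^ m := by
    rw [hud.mul_pow, mul_assoc, (hdf.pow_left m).eq]
    simp only [mul_assoc, inv_mul_cancel_left₀ (pow_ne_zero m hu0)]
  have hvconj (m : ℕ) : Commute v (u ^ m * f * (u ^ m)⁻¹) :=
    ((huv.symm.pow_right m).mul_right hvf).mul_right (huv.symm.pow_right m).inv_right₀
  have hΔtr : Commute (1 - θ ^ n) (conjTrace n u f) :=
    (Commute.one_left _).sub_left ((commute_mul_conjTrace hu0 hud hun hdf).pow_left n)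
  calc conjTrace n v ((1 - θ)⁻¹ * (f * traceWeight n θ))
      = (1 - θ ^ n)⁻¹ * ∑ m ∈ range n,
          conjTrace n v (u ^ m * f * (u ^ m)⁻¹ * (θ ^ m * traceWeight n θ)) := by
        rw [inv_one_sub_eq_geom_sum hne, mul_assoc, conjTrace_mul_left hvΔ, sum_mul, map_sum]
        simp only [← mul_assoc, hmove]
    _ = (1 - θ ^ n)⁻¹ * (conjTrace n u f * (1 - θ ^ n)) := by
        rw [conjTrace_apply n u, sum_mul]
        refine congrArg _ (sum_congr rfl fun m hm => ?_)
        rw [conjTrace_mul_left (hvconj m),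
          conjTrace_pow_mul_traceWeight hζ hv0 (mul_ne_zero hu0 hd0) hvθ (mem_range.1 hm)]
    _ = conjTrace n u f := by
        rw [← hΔtr.eq, inv_mul_cancel_left₀ (sub_ne_zero.2 hne.symm)]

lemma conjTrace_conj_one_sub_mul [NeZero n] (hζ : IsPrimitiveRoot ζ n) (hu0 : u ≠ 0)
    (hd0 : d ≠ 0) (hv0 : v ≠ 0) (hud : Commute u d) (huv : Commute u v)
    (hvd : SemiconjBy v d (ζ • d)) (hun : ∀ x, Commute (u ^ n) x) (hne : (u * d) ^ n ≠ 1)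
    (hdf : Commute d f) (hvf : Commute v f) :
    conjTrace n ((1 - u * d) * v * (1 - u * d)⁻¹) (f * traceWeight n (u * d) * (1 - u * d)⁻¹) =
      conjTrace n u f := by
  have hQ := one_sub_ne_zero_of_pow_ne_one hne
  have hQtr : Commute (1 - u * d) (conjTrace n u f) :=
    (Commute.one_left _).sub_left (commute_mul_conjTrace hu0 hud hun hdf)
  have hsemi := semiconjBy_conjTrace (n := n) (semiconjBy_mul_mul_inv₀ hQ v)
    (semiconjBy_mul_mul_inv₀ hQ ((1 - u * d)⁻¹ * (f * traceWeight n (u * d))))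
  rw [conjTrace_inv_one_sub_mul hζ hu0 hd0 hv0 hud huv hvd hun hne hdf hvf,
    mul_inv_cancel_left₀ hQ] at hsemi
  exact mul_right_cancel₀ hQ (hsemi.eq.symm.trans hQtr.eq)

end TraceWeight

section Tightness

variable {n : ℕ} {A G K : Type*}

lemma ATight.two_of_one [Ring A] [Ring G] {φ : A →+* Matrix (Fin n) (Fin n) G} (h1 : ATight φ 1)
    {i₀ i₁ : Fin n} (hi₀ : (i₀ : ℕ) = 0) (hi₁ : (i₁ : ℕ) = 1) {e : A}
    (he : ∀ x, φ (e * x) i₀ = φ x i₁)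
    (hdecomp : ∀ f, ∃ s t, (∀ j ≠ i₀, φ s i₀ j = 0) ∧ (∀ j ≠ i₀, φ t i₀ j = 0) ∧ f = e * s + t) :
    ATight φ 2 := by
  intro g
  obtain ⟨x, hx⟩ := h1 g
  obtain ⟨y, hy⟩ := h1 fun _ => g i₁
  obtain ⟨s, t, hs, ht, hst⟩ := hdecomp (y - e * x)
  have hshift : e * (x + s) = y - t := by
    rw [mul_add, ← sub_eq_iff_eq_add.2 hst]; abel
  refine ⟨x + s, fun i j hi hj => ?_⟩
  have hj0 : j ≠ i₀ := fun h => by omega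
  rcases (by omega : (i : ℕ) = 0 ∨ (i : ℕ) = 1) with h0 | h1
  · obtain rfl : i = i₀ := Fin.ext (h0.trans hi₀.symm)
    simp [hs j hj0, hx i j (by omega) (by omega)]
  · obtain rfl : i = i₁ := Fin.ext (h1.trans hi₁.symm)
    rw [← he, hshift, map_sub, Matrix.sub_apply, ht j hj0, sub_zero]
    exact hy i₀ j (by omega) (by omega)

lemma ATight.pred_of_self [Ring A] [Ring G] {φ : A →+* Matrix (Fin n) (Fin n) G}
    (hn : ATight φ n) {k l : Fin n} (hk : (k : ℕ) + 2 = n) (hl : (l : ℕ) + 1 = n) {e : A}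
    (he : ∀ x i, φ (x * e) i l = φ x i k)
    (hdecomp : ∀ f, ∃ s t, (∀ i ≠ l, φ s i l = 0) ∧ (∀ i ≠ l, φ t i l = 0) ∧ f = s * e + t) :
    ATight φ (n - 1) := by
  intro g
  obtain ⟨x, hx⟩ := hn g
  obtain ⟨y, hy⟩ := hn fun i _ => g i k
  obtain ⟨s, t, hs, ht, hst⟩ := hdecomp (y - x * e)
  have hshift : (x + s) * e = y - t := by
    rw [add_mul, ← sub_eq_iff_eq_add.2 hst]; abel
  refine ⟨x + s, fun i j hi hj => ?_⟩
  have hil : i ≠ l := fun h => by omega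
  rcases (by omega : (j : ℕ) + 1 = n ∨ (j : ℕ) + 2 = n) with h1 | h2
  · obtain rfl : j = l := Fin.ext (by omega)
    simp [hs i hil, hx i j i.isLt (by omega)]
  · obtain rfl : j = k := Fin.ext (by omega)
    rw [← he, hshift, map_sub, Matrix.sub_apply, ht i hil, sub_zero]
    exact hy i l i.isLt (by omega)

/-- The elements mapped by `φ` to matrices whose column `l` vanishes off the diagonal. -/
def colSubfield [DivisionRing K] [DivisionRing G] (φ : K →+* Matrix (Fin n) (Fin n) G)
    (l : Fin n) : Subfield K where
  carrier := {x | ∀ i ≠ l, φ x i l = 0}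
  mul_mem' {x y} hx hy i hi := by
    rw [map_mul, Matrix.mul_apply, sum_eq_zero]
    intro m _
    by_cases hm : m = l
    · rw [hm, hx i hi, zero_mul]
    · rw [hy m hm, mul_zero]
  one_mem' i hi := by rw [map_one, Matrix.one_apply_ne hi]
  add_mem' {x y} hx hy i hi := by rw [map_add, Matrix.add_apply, hx i hi, hy i hi, add_zero]
  zero_mem' i _ := by rw [map_zero, Matrix.zero_apply]
  neg_mem' {x} hx i hi := by rw [map_neg, Matrix.neg_apply, hx i hi, neg_zero]
  inv_mem' x hx i hi := by
    rcases eq_or_ne x 0 with rfl | hx0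
    · rw [inv_zero, map_zero, Matrix.zero_apply]
    have hcol (i : Fin n) : φ x⁻¹ i l * φ x l l = (1 : Matrix (Fin n) (Fin n) G) i l := by
      rw [← map_one φ, ← inv_mul_cancel₀ hx0, map_mul, Matrix.mul_apply, sum_eq_single l]
      · exact fun m _ hm => by rw [hx m hm, mul_zero]
      · exact fun h => absurd (mem_univ l) h
    have hll : φ x l l ≠ 0 := right_ne_zero_of_mul_eq_one <| by rw [hcol, Matrix.one_apply_eq]
    exact (mul_eq_zero.1 ((hcol i).trans (Matrix.one_apply_ne hi))).resolve_right hll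

lemma mem_colSubfield [DivisionRing K] [DivisionRing G] {φ : K →+* Matrix (Fin n) (Fin n) G}
    {l : Fin n} {x : K} : x ∈ colSubfield φ l ↔ ∀ i ≠ l, φ x i l = 0 := Iff.rfl

lemma exists_eq_smul_add_smul_of_span_pair {V : Type*} [DivisionRing K] [AddCommGroup V]
    [Module K V] {x y p q f : V} (hy : y ≠ 0) (hxy : ∀ r : K, r • y ≠ x)
    (hspan : ∀ z ∈ ({x, y, f} : Set V), ∃ s t : K, s • p + t • q = z) :
    ∃ s t : K, s • x + t • y = f := by
  classical
  simp only [← Submodule.mem_span_pair] at hspan ⊢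
  have hle : Submodule.span K {y, x} ≤ Submodule.span K {p, q} :=
    Submodule.span_le.2 (Set.pair_subset (hspan y (by simp)) (hspan x (by simp)))
  have hcard : Module.finrank K (Submodule.span K {y, x}) = 2 := by
    have hrank := finrank_span_eq_card ((LinearIndependent.pair_iff' hy).2 hxy)
    rwa [Matrix.range_cons_cons_empty] at hrank
  have hfin : Module.finrank K (Submodule.span K {p, q}) ≤ 2 := by
    have hle := finrank_span_finset_le_card (R := K) ({p, q} : Finset V)
    push_cast at hle
    exact hle.trans card_le_two
  have := FiniteDimensional.span_of_finite K (Set.toFinite {p, q})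
  rw [Set.pair_comm, Submodule.eq_of_le_of_finrank_le hle (hfin.trans hcard.ge)]
  exact hspan f (by simp)

lemma exists_eq_mul_add_of_left_span_pair [DivisionRing K] {C : Subfield K} {e p q f : K}
    (he : e ∉ C) (hspan : ∀ z ∈ ({e, 1, f} : Set K), ∃ s ∈ C, ∃ t ∈ C, s * p + t * q = z) :
    ∃ s ∈ C, ∃ t ∈ C, s * e + t = f := by
  have hspan' (z) (hz : z ∈ ({e, 1, f} : Set K)) : ∃ s t : C, s • p + t • q = z := by
    obtain ⟨s, hs, t, ht, h⟩ := hspan z hz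
    exact ⟨⟨s, hs⟩, ⟨t, ht⟩, h⟩
  obtain ⟨s, t, h⟩ := exists_eq_smul_add_smul_of_span_pair one_ne_zero
    (fun r h => he (by rw [← h, Subfield.smul_def, smul_eq_mul, mul_one]; exact r.2)) hspan'
  exact ⟨s, s.2, t, t.2, by rw [← h, Subfield.smul_def t, smul_eq_mul, mul_one]; rfl⟩

lemma exists_eq_mul_add_of_right_span_pair [DivisionRing K] {C : Subfield K} {e p q f : K}
    (he : e ∉ C) (hspan : ∀ z ∈ ({e, 1, f} : Set K), ∃ s ∈ C, ∃ t ∈ C, p * s + q * t = z) :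
    ∃ s ∈ C, ∃ t ∈ C, e * s + t = f := by
  let : Module Cᵐᵒᵖ K := Module.compHom K (RingHom.op C.subtype)
  have hsmul (r : Cᵐᵒᵖ) (z : K) : r • z = z * r.unop := rfl
  have hspan' (z) (hz : z ∈ ({e, 1, f} : Set K)) : ∃ s t : Cᵐᵒᵖ, s • p + t • q = z := by
    obtain ⟨s, hs, t, ht, h⟩ := hspan z hz
    exact ⟨.op ⟨s, hs⟩, .op ⟨t, ht⟩, h⟩
  obtain ⟨s, t, h⟩ := exists_eq_smul_add_smul_of_span_pair one_ne_zero
    (fun r h => he (by rw [← h, hsmul, one_mul]; exact r.unop.2)) hspan'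
  exact ⟨s.unop, s.unop.2, t.unop, t.unop.2, by rw [← h, hsmul, hsmul, one_mul]⟩

/-- Right multiplication by the elements of `K` in a basis of `K` as a left vector space over the
subfield `G`; matrices act on row vectors from the right. -/
noncomputable def rightMulMatrix [DivisionRing K] {G : Subfield K} (b : Module.Basis (Fin n) G K) :
    K →+* Matrix (Fin n) (Fin n) G where
  toFun x := .of fun i j => b.repr (b i * x) j
  map_one' := by ext i j; simp [Matrix.one_apply, Finsupp.single_apply]
  map_mul' x y := by
    ext i j
    have hmul : b i * (x * y) = ∑ m, b.repr (b i * x) m • (b m * y) := by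
      simp only [← mul_assoc, ← smul_mul_assoc, ← sum_mul, b.sum_repr]
    simp only [Matrix.of_apply, hmul, Matrix.mul_apply, map_sum, map_smul, Finsupp.coe_finsetSum,
      Finset.sum_apply, Finsupp.smul_apply, smul_eq_mul]
  map_zero' := by ext i j; simp
  map_add' x y := by ext i j; simp [mul_add]

lemma rightMulMatrix_apply [DivisionRing K] {G : Subfield K} (b : Module.Basis (Fin n) G K)
    (x : K) (i j : Fin n) : rightMulMatrix b x i j = b.repr (b i * x) j := rfl

lemma rightMulMatrix_apply_of_mem [DivisionRing K] {G : Subfield K} {b : Module.Basis (Fin n) G K}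
    {i₀ : Fin n} (hb : b i₀ = 1) {x : K} (hx : x ∈ G) {j : Fin n} (hj : j ≠ i₀) :
    rightMulMatrix b x i₀ j = 0 := by
  have hsmul : b i₀ * x = (⟨x, hx⟩ : G) • b i₀ := by
    rw [hb, one_mul, Subfield.smul_def, smul_eq_mul, mul_one]
  rw [rightMulMatrix_apply, hsmul, map_smul, b.repr_self, Finsupp.smul_apply,
    Finsupp.single_eq_of_ne hj, smul_zero]

lemma aTight_one_rightMulMatrix [DivisionRing K] {G : Subfield K} (b : Module.Basis (Fin n) G K)
    {i₀ : Fin n} (hi₀ : (i₀ : ℕ) = 0) (hb : b i₀ = 1) : ATight (rightMulMatrix b) 1 := by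
  refine fun g => ⟨∑ j, g i₀ j • b j, fun i j hi _ => ?_⟩
  obtain rfl : i = i₀ := Fin.ext (by omega)
  rw [rightMulMatrix_apply, hb, one_mul, b.repr_sum_self]

end Tightness

section Tower

variable {k K : Type*} [Field k] [DivisionRing K]

/-- The centralizer of a set, as a subfield. -/
def centralizerSubfield (s : Set K) : Subfield K where
  __ := Subring.centralizer s
  inv_mem' _ := Set.inv_mem_centralizer₀

lemma mem_centralizerSubfield {s : Set K} {x : K} :
    x ∈ centralizerSubfield s ↔ ∀ c ∈ s, Commute c x := Iff.rfl

/-- A sequence of mutually commuting pairs `aᵢ, bᵢ` with `bᵢ aᵢ = ζ aᵢ bᵢ` such that every element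
of `K` commutes with almost all of them. The field `pow_mul_pow_ne_one` makes the elements
`1 - u_N a_{N+1}` of the tower built in `WeylSystem.twist` invertible. -/
structure WeylSystem (n : ℕ) (ζ : k) (K : Type*) [DivisionRing K] [Algebra k K] where
  a : ℕ → K
  b : ℕ → K
  isPrimitiveRoot : IsPrimitiveRoot ζ n
  a_ne_zero : ∀ i, a i ≠ 0
  b_ne_zero : ∀ i, b i ≠ 0
  semiconjBy : ∀ i, SemiconjBy (b i) (a i) (ζ • a i)
  commute_a : ∀ i j, Commute (a i) (a j)
  commute_b : ∀ i j, Commute (b i) (b j)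
  commute_a_b : ∀ i j, i ≠ j → Commute (a i) (b j)
  commute_b_pow : ∀ i x, Commute (b i ^ n) x
  pow_mul_pow_ne_one : ∀ i, b i ^ n * a (i + 1) ^ n ≠ 1
  eventually_commute : ∀ x, ∀ᶠ i in Filter.atTop, Commute (a i) x ∧ Commute (b i) x

namespace WeylSystem

variable [Algebra k K] {n : ℕ} {ζ : k} (W : WeylSystem n ζ K) {N : ℕ} {x : K}

/-- The elements commuting with all pairs of index greater than `N`. -/
def level (N : ℕ) : Subfield K :=
  centralizerSubfield (W.a '' Set.Ioi N ∪ W.b '' Set.Ioi N)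

lemma mem_level : x ∈ W.level N ↔ ∀ i > N, Commute (W.a i) x ∧ Commute (W.b i) x := by
  simp only [level, mem_centralizerSubfield, Set.mem_union, or_imp, forall_and,
    Set.forall_mem_image, Set.mem_Ioi, gt_iff_lt]

lemma level_mono : Monotone W.level := fun _ _ hMN _ hx =>
  W.mem_level.2 fun i hi => W.mem_level.1 hx i (hMN.trans_lt hi)

lemma eventually_mem_level (x : K) : ∀ᶠ N in Filter.atTop, x ∈ W.level N := by
  filter_upwards [Filter.eventually_forall_ge_atTop.2 (W.eventually_commute x)] with N hN
  exact W.mem_level.2 fun i hi => hN i hi.le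

lemma a_mem_level {i : ℕ} (hi : i ≤ N) : W.a i ∈ W.level N :=
  W.mem_level.2 fun j hj => ⟨W.commute_a j i, (W.commute_a_b i j (by omega)).symm⟩

lemma b_mem_level {i : ℕ} (hi : i ≤ N) : W.b i ∈ W.level N :=
  W.mem_level.2 fun j hj => ⟨W.commute_a_b j i (by omega), W.commute_b j i⟩

/-- The elements whose conjugation traces define the tower: `u₀ = b₀`, and `u_{N+1}` is the
conjugate of `b_{N+1}` by `1 - u_N a_{N+1}`. -/
def twist : ℕ → K
  | 0 => W.b 0
  | N + 1 => (1 - twist N * W.a (N + 1)) * W.b (N + 1) * (1 - twist N * W.a (N + 1))⁻¹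

/-- The product `θ_N = u_N a_{N+1}`. -/
def theta (N : ℕ) : K := W.twist N * W.a (N + 1)

lemma twist_succ (N : ℕ) :
    W.twist (N + 1) = (1 - W.theta N) * W.b (N + 1) * (1 - W.theta N)⁻¹ := rfl

lemma twist_mem_level (N : ℕ) : W.twist N ∈ W.level N := by
  induction N with
  | zero => exact W.b_mem_level le_rfl
  | succ N ih =>
    have hQ : 1 - W.theta N ∈ W.level (N + 1) := sub_mem (one_mem _)
      (mul_mem (W.level_mono N.le_succ ih) (W.a_mem_level le_rfl))
    exact mul_mem (mul_mem hQ (W.b_mem_level le_rfl)) (inv_mem hQ)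

lemma commute_twist_a (N : ℕ) : Commute (W.twist N) (W.a (N + 1)) :=
  (W.mem_level.1 (W.twist_mem_level N) _ N.lt_succ_self).1.symm

lemma commute_twist_b (N : ℕ) : Commute (W.twist N) (W.b (N + 1)) :=
  (W.mem_level.1 (W.twist_mem_level N) _ N.lt_succ_self).2.symm

lemma semiconjBy_theta (N : ℕ) : SemiconjBy (W.b (N + 1)) (W.theta N) (ζ • W.theta N) := by
  simpa only [theta, mul_smul_comm] using
    SemiconjBy.mul_right (W.commute_twist_b N).symm (W.semiconjBy (N + 1))

lemma theta_pow_of_twist_pow (h : W.twist N ^ n = W.b N ^ n) : W.theta N ^ n ≠ 1 := by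
  rw [theta, (W.commute_twist_a N).mul_pow, h]
  exact W.pow_mul_pow_ne_one N

lemma twist_pow (N : ℕ) : W.twist N ^ n = W.b N ^ n := by
  induction N with
  | zero => rfl
  | succ N ih =>
    have hQ := one_sub_ne_zero_of_pow_ne_one (W.theta_pow_of_twist_pow ih)
    have hconj : SemiconjBy (1 - W.theta N) (W.b (N + 1)) (W.twist (N + 1)) :=
      semiconjBy_mul_mul_inv₀ hQ _
    refine mul_right_cancel₀ hQ ((hconj.pow_right n).eq.symm.trans ?_)
    exact (W.commute_b_pow _ _).eq.symm

lemma theta_pow_ne_one (N : ℕ) : W.theta N ^ n ≠ 1 := W.theta_pow_of_twist_pow (W.twist_pow N)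

lemma one_sub_theta_ne_zero (N : ℕ) : 1 - W.theta N ≠ 0 :=
  one_sub_ne_zero_of_pow_ne_one (W.theta_pow_ne_one N)

lemma twist_ne_zero : ∀ N, W.twist N ≠ 0
  | 0 => W.b_ne_zero 0
  | N + 1 => mul_ne_zero (mul_ne_zero (W.one_sub_theta_ne_zero N) (W.b_ne_zero _))
      (inv_ne_zero (W.one_sub_theta_ne_zero N))

/-- The fixed points in `level N` of conjugation by `twist N`. -/
def fixedLevel (N : ℕ) : Subfield K := W.level N ⊓ centralizerSubfield {W.twist N}

lemma mem_fixedLevel : x ∈ W.fixedLevel N ↔ x ∈ W.level N ∧ Commute (W.twist N) x := by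
  simp only [fixedLevel, Subfield.mem_inf, mem_centralizerSubfield, Set.mem_singleton_iff,
    forall_eq]

lemma commute_theta_of_mem_fixedLevel (hx : x ∈ W.fixedLevel N) : Commute (W.theta N) x := by
  obtain ⟨hlevel, htwist⟩ := W.mem_fixedLevel.1 hx
  exact htwist.mul_left (W.mem_level.1 hlevel _ N.lt_succ_self).1

lemma fixedLevel_mono : Monotone W.fixedLevel := by
  refine monotone_nat_of_le_succ fun N x hx => W.mem_fixedLevel.2 ⟨?_, ?_⟩
  · exact W.level_mono N.le_succ (W.mem_fixedLevel.1 hx).1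
  · have hQ : Commute (1 - W.theta N) x :=
      (Commute.one_left x).sub_left (W.commute_theta_of_mem_fixedLevel hx)
    have hb := (W.mem_level.1 (W.mem_fixedLevel.1 hx).1 _ N.lt_succ_self).2
    exact (hQ.mul_left hb).mul_left hQ.inv_left₀

/-- The union of the `fixedLevel`s, the division ring of matrix entries. -/
def base : Subfield K := ⨆ N, W.fixedLevel N

lemma mem_base : x ∈ W.base ↔ ∃ N, x ∈ W.fixedLevel N :=
  Subfield.mem_iSup_of_directed W.fixedLevel_mono.directed_le

lemma eventually_mem_fixedLevel (hx : x ∈ W.base) : ∀ᶠ N in Filter.atTop, x ∈ W.fixedLevel N := by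
  obtain ⟨N, hN⟩ := W.mem_base.1 hx
  filter_upwards [Filter.eventually_ge_atTop N] with M hM using W.fixedLevel_mono hM hN

/-- The elements `w_N` for which the traces `x ↦ conjTrace n u_N (x w_N)` on `level N` are
compatible for varying `N`. -/
def weight : ℕ → K
  | 0 => (n : K)⁻¹
  | N + 1 => weight N * traceWeight n (W.theta N) * (1 - W.theta N)⁻¹

lemma theta_mem_level_succ (N : ℕ) : W.theta N ∈ W.level (N + 1) :=
  mul_mem (W.level_mono N.le_succ (W.twist_mem_level N)) (W.a_mem_level le_rfl)

lemma weight_mem_level (N : ℕ) : W.weight N ∈ W.level N := by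
  induction N with
  | zero => exact inv_mem (natCast_mem _ n)
  | succ N ih =>
    have hθ := W.theta_mem_level_succ N
    exact mul_mem (mul_mem (W.level_mono N.le_succ ih) (traceWeight_mem hθ))
      (inv_mem (sub_mem (one_mem _) hθ))

lemma conjTrace_mul_weight_succ [NeZero n] (hx : x ∈ W.level N) :
    conjTrace n (W.twist (N + 1)) (x * W.weight (N + 1)) =
      conjTrace n (W.twist N) (x * W.weight N) := by
  have hcomm := W.mem_level.1 (mul_mem hx (W.weight_mem_level N)) _ N.lt_succ_self
  have hun (y : K) : Commute (W.twist N ^ n) y := W.twist_pow N ▸ W.commute_b_pow N y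
  have key := conjTrace_conj_one_sub_mul W.isPrimitiveRoot (W.twist_ne_zero N)
    (W.a_ne_zero (N + 1)) (W.b_ne_zero (N + 1)) (W.commute_twist_a N) (W.commute_twist_b N)
    (W.semiconjBy _) hun (W.theta_pow_ne_one N) hcomm.1 hcomm.2
  rw [twist_succ, weight, ← key]
  simp only [theta, mul_assoc]

/-- The basis dual to the powers `e ^ j`, `e = a₀`, with respect to the trace of level `N`. -/
def dual (N j : ℕ) : K := (W.a 0 ^ j)⁻¹ * W.weight N

lemma dual_mem_level (N j : ℕ) : W.dual N j ∈ W.level N :=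
  mul_mem (inv_mem (pow_mem (W.a_mem_level N.zero_le) j)) (W.weight_mem_level N)

lemma weight_ne_zero [NeZero n] : ∀ N, W.weight N ≠ 0
  | 0 => inv_ne_zero (natCast_ne_zero_of_isPrimitiveRoot W.isPrimitiveRoot)
  | N + 1 => mul_ne_zero (mul_ne_zero (weight_ne_zero N) (left_ne_zero_of_mul
      (traceWeight_mul_one_sub_inv_ne_zero W.isPrimitiveRoot (W.theta_pow_ne_one N))))
      (inv_ne_zero (W.one_sub_theta_ne_zero N))

lemma dual_ne_zero [NeZero n] (N j : ℕ) : W.dual N j ≠ 0 :=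
  mul_ne_zero (inv_ne_zero (pow_ne_zero j (W.a_ne_zero 0))) (W.weight_ne_zero N)

lemma conjTrace_pow_mul_dual [NeZero n] (N : ℕ) {i j : ℕ} (hi : i < n) (hj : j < n) :
    conjTrace n (W.twist N) (W.a 0 ^ i * W.dual N j) = if i = j then 1 else 0 := by
  have hn := natCast_ne_zero_of_isPrimitiveRoot (K := K) W.isPrimitiveRoot
  induction N with
  | zero =>
    have hpow : W.a 0 ^ i * W.dual 0 j = W.a 0 ^ ((i : ℤ) - j) * (n : K)⁻¹ := by
      rw [dual, weight, zpow_sub₀ (W.a_ne_zero 0), zpow_natCast, zpow_natCast, div_eq_mul_inv,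
        mul_assoc]
    rw [hpow, conjTrace_mul_right (Nat.commute_cast _ n).inv_right₀, twist,
      conjTrace_zpow_sub W.isPrimitiveRoot (W.b_ne_zero 0) (W.semiconjBy 0) hi hj, ite_mul,
      mul_inv_cancel₀ hn, zero_mul]
  | succ N ih =>
    have ha := W.a_mem_level N.zero_le
    rw [← ih, dual, dual, ← mul_assoc, ← mul_assoc, W.conjTrace_mul_weight_succ
      (mul_mem (pow_mem ha i) (inv_mem (pow_mem ha j)))]

lemma sum_conjTrace_mul_dual_mul_pow [NeZero n] (N : ℕ) (x : K) :
    ∑ j : Fin n, conjTrace n (W.twist N) (x * W.dual N j) * W.a 0 ^ (j : ℕ) = x :=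
  sum_conjTrace_mul_of_dual (p := fun i : Fin n => W.a 0 ^ (i : ℕ)) (q := fun j => W.dual N j)
    (fun i j => by simp [W.conjTrace_pow_mul_dual N i.isLt j.isLt, Fin.ext_iff])
    (W.twist_ne_zero N) x

lemma conjTrace_mem_fixedLevel [NeZero n] (hx : x ∈ W.level N) :
    conjTrace n (W.twist N) x ∈ W.fixedLevel N := by
  have hpow : Commute (W.twist N ^ n) x := W.twist_pow N ▸ W.commute_b_pow N x
  exact W.mem_fixedLevel.2 ⟨conjTrace_mem (W.twist_mem_level N) hx,
    commute_self_conjTrace (W.twist_ne_zero N) hpow⟩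

lemma fixedLevel_le_base (N : ℕ) : W.fixedLevel N ≤ W.base := le_iSup W.fixedLevel N

lemma conjTrace_sum_mul_pow_mul_dual [NeZero n] {c : Fin n → K}
    (hc : ∀ j, c j ∈ W.fixedLevel N) (i : Fin n) :
    conjTrace n (W.twist N) ((∑ j, c j * W.a 0 ^ (j : ℕ)) * W.dual N i) = c i := by
  simp only [sum_mul, map_sum, mul_assoc]
  simp_rw [conjTrace_mul_left (W.mem_fixedLevel.1 (hc _)).2,
    W.conjTrace_pow_mul_dual N (Fin.isLt _) i.isLt, ← Fin.ext_iff]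
  simp

lemma linearIndependent_pow [NeZero n] :
    LinearIndependent W.base fun j : Fin n => W.a 0 ^ (j : ℕ) := by
  refine Fintype.linearIndependent_iff.2 fun g hg i => ?_
  obtain ⟨N, hN⟩ :=
    (Filter.eventually_all.2 fun j => W.eventually_mem_fixedLevel (g j).2).exists
  have hgi := W.conjTrace_sum_mul_pow_mul_dual hN i
  have hg' : ∑ j, (g j : K) * W.a 0 ^ (j : ℕ) = 0 := hg
  rw [hg', zero_mul, map_zero] at hgi
  exact Subtype.ext hgi.symm

lemma top_le_span_range_pow [NeZero n] :
    ⊤ ≤ Submodule.span W.base (Set.range fun j : Fin n => W.a 0 ^ (j : ℕ)) := by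
  intro x _
  obtain ⟨N, hN⟩ := (W.eventually_mem_level x).exists
  rw [← W.sum_conjTrace_mul_dual_mul_pow N x]
  refine sum_mem fun j _ => Submodule.smul_mem _ (⟨_, W.fixedLevel_le_base N
    (W.conjTrace_mem_fixedLevel (mul_mem hN (W.dual_mem_level N j)))⟩ : W.base)
    (Submodule.subset_span ⟨j, rfl⟩)

/-- The powers `1, e, …, e ^ (n - 1)` of `e = a₀` as a basis of `K` over `base`. -/
noncomputable def powBasis [NeZero n] : Module.Basis (Fin n) W.base K :=
  .mk W.linearIndependent_pow W.top_le_span_range_pow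

lemma powBasis_apply [NeZero n] (i : Fin n) : W.powBasis i = W.a 0 ^ (i : ℕ) :=
  Module.Basis.mk_apply _ _ i

lemma powBasis_repr [NeZero n] (hx : x ∈ W.level N) (j : Fin n) :
    (W.powBasis.repr x j : K) = conjTrace n (W.twist N) (x * W.dual N j) := by
  let c (j : Fin n) : W.base := ⟨conjTrace n (W.twist N) (x * W.dual N j), W.fixedLevel_le_base N
    (W.conjTrace_mem_fixedLevel (mul_mem hx (W.dual_mem_level N j)))⟩
  have hsum : ∑ j, c j • W.powBasis j = x := by
    simp only [powBasis_apply]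
    exact W.sum_conjTrace_mul_dual_mul_pow N x
  nth_rw 1 [← hsum]
  rw [W.powBasis.repr_sum_self]

/-- The embedding of `K` into the matrices over `base` by right multiplication. -/
noncomputable def embedding [NeZero n] : K →+* Matrix (Fin n) (Fin n) W.base :=
  rightMulMatrix W.powBasis

lemma embedding_apply [NeZero n] (hx : x ∈ W.level N) (i j : Fin n) :
    (W.embedding x i j : K) = conjTrace n (W.twist N) (W.a 0 ^ (i : ℕ) * x * W.dual N j) := by
  rw [embedding, rightMulMatrix_apply, powBasis_apply]
  exact W.powBasis_repr (mul_mem (pow_mem (W.a_mem_level N.zero_le) _) hx) j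

lemma aTight_embedding_one [NeZero n] : ATight W.embedding 1 :=
  aTight_one_rightMulMatrix W.powBasis (i₀ := 0) rfl (by simp [powBasis_apply])

lemma aTight_embedding_self [NeZero n] : ATight W.embedding n := by
  intro g
  let l : Fin n := ⟨n - 1, by have := NeZero.pos n; omega⟩
  obtain ⟨N, hN⟩ :=
    (Filter.eventually_all.2 fun i => W.eventually_mem_fixedLevel (g i l).2).exists
  have hmem (i : Fin n) : (g i l : K) ∈ W.level N := (W.mem_fixedLevel.1 (hN i)).1
  have hl := W.dual_mem_level N l
  refine ⟨(∑ s : Fin n, W.dual N s * g s l) * (W.dual N l)⁻¹, fun i j _ hj => Subtype.ext ?_⟩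
  obtain rfl : j = l := Fin.ext (Nat.le_antisymm (Nat.le_sub_one_of_lt j.isLt) (by omega))
  rw [W.embedding_apply (mul_mem (sum_mem fun s _ => mul_mem (W.dual_mem_level N _) (hmem _))
    (inv_mem hl)), mul_assoc, inv_mul_cancel_right₀ (W.dual_ne_zero N l), mul_sum, map_sum]
  simp_rw [← mul_assoc, conjTrace_mul_right (W.mem_fixedLevel.1 (hN _)).2,
    W.conjTrace_pow_mul_dual N i.isLt (Fin.isLt _), ← Fin.ext_iff]
  simp

lemma conj_one_sub_theta_mem_fixedLevel [NeZero n] (hx : x ∈ W.level (N + 1))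
    (hb : Commute (W.b (N + 1)) x) :
    (1 - W.theta N) * x * (1 - W.theta N)⁻¹ ∈ W.fixedLevel (N + 1) := by
  have hQ0 := W.one_sub_theta_ne_zero N
  have hQ := sub_mem (one_mem _) (W.theta_mem_level_succ N)
  refine W.mem_fixedLevel.2 ⟨mul_mem (mul_mem hQ hx) (inv_mem hQ), ?_⟩
  have hconjb := semiconjBy_mul_mul_inv₀ hQ0 (W.b (N + 1))
  have hconjx := semiconjBy_mul_mul_inv₀ hQ0 x
  refine mul_right_cancel₀ hQ0 ?_
  rw [twist_succ, ← (hconjb.mul_right hconjx).eq, hb.eq, (hconjx.mul_right hconjb).eq]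

lemma exists_right_span_base [NeZero n] (hx : x ∈ W.level N) :
    ∃ s ∈ W.base, ∃ t ∈ W.base,
      (1 - W.theta N)⁻¹ * s + W.a (N + 1) * (1 - W.theta N)⁻¹ * t = x := by
  have hQ := W.one_sub_theta_ne_zero N
  have hmem {y : K} (hy : y ∈ W.level N) := W.fixedLevel_le_base _
    (W.conj_one_sub_theta_mem_fixedLevel (W.level_mono N.le_succ hy)
      (W.mem_level.1 hy _ N.lt_succ_self).2)
  refine ⟨_, hmem hx, _, neg_mem (hmem (mul_mem hx (W.twist_mem_level N))), ?_⟩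
  have hcomm := ((W.mem_level.1 (mul_mem hx (W.twist_mem_level N)) _ N.lt_succ_self).1).eq
  calc (1 - W.theta N)⁻¹ * ((1 - W.theta N) * x * (1 - W.theta N)⁻¹) +
        W.a (N + 1) * (1 - W.theta N)⁻¹ * -((1 - W.theta N) * (x * W.twist N) * (1 - W.theta N)⁻¹)
      = (x - W.a (N + 1) * (x * W.twist N)) * (1 - W.theta N)⁻¹ := by
        rw [sub_mul _ _ (1 - W.theta N)⁻¹]
        simp only [mul_neg, ← sub_eq_add_neg, mul_assoc, inv_mul_cancel_left₀ hQ]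
    _ = x := by
        rw [hcomm, mul_assoc, ← theta, ← mul_one_sub, mul_inv_cancel_right₀ hQ]

lemma a_zero_notMem_base [NeZero n] (hn : 2 ≤ n) : W.a 0 ∉ W.base := fun h => by
  obtain ⟨N, hN⟩ := W.mem_base.1 h
  have h1 := W.conjTrace_pow_mul_dual N (i := 1) (j := 0) (by omega) (by omega)
  have h0 := W.conjTrace_pow_mul_dual N (i := 0) (j := 0) (by omega) (by omega)
  rw [pow_zero, one_mul, if_pos rfl] at h0
  rw [pow_one, conjTrace_mul_left (W.mem_fixedLevel.1 hN).2, h0, mul_one, if_neg one_ne_zero] at h1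
  exact W.a_ne_zero 0 h1

lemma exists_subset_level {s : Set K} (hs : s.Finite) : ∃ N, s ⊆ W.level N :=
  ((Filter.eventually_all_finite hs).2 fun x _ => W.eventually_mem_level x).exists

lemma aTight_embedding_two [NeZero n] (hn : 2 ≤ n) : ATight W.embedding 2 := by
  let i₁ : Fin n := ⟨1, hn⟩
  have hone : W.powBasis 0 = 1 := by simp [powBasis_apply]
  have hbase (s : K) (hs : s ∈ W.base) (j) (hj : j ≠ 0) : W.embedding s 0 j = 0 :=
    rightMulMatrix_apply_of_mem hone hs hj
  refine W.aTight_embedding_one.two_of_one (i₀ := 0) (i₁ := i₁) (e := W.a 0) rfl rfl ?_ ?_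
  · intro x
    ext j
    simp [embedding, rightMulMatrix_apply, powBasis_apply, i₁]
  · intro f
    obtain ⟨N, hN⟩ := W.exists_subset_level (Set.toFinite {W.a 0, 1, f})
    obtain ⟨s, hs, t, ht, hst⟩ := exists_eq_mul_add_of_right_span_pair
      (W.a_zero_notMem_base hn) fun z hz => W.exists_right_span_base (hN hz)
    exact ⟨s, t, hbase s hs, hbase t ht, hst.symm⟩

lemma dual_conj_mem_colSubfield [NeZero n] (l : Fin n) (hx : x ∈ W.fixedLevel N) :
    W.dual N l * x * (W.dual N l)⁻¹ ∈ colSubfield W.embedding l := by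
  have hl := W.dual_mem_level N l
  refine mem_colSubfield.2 fun i hi => Subtype.ext ?_
  rw [W.embedding_apply (mul_mem (mul_mem hl (W.mem_fixedLevel.1 hx).1) (inv_mem hl)),
    mul_assoc, inv_mul_cancel_right₀ (W.dual_ne_zero N l), ← mul_assoc,
    conjTrace_mul_right (W.mem_fixedLevel.1 hx).2, W.conjTrace_pow_mul_dual N i.isLt l.isLt,
    if_neg (Fin.val_ne_of_ne hi), zero_mul, ZeroMemClass.coe_zero]

/-- An element which, together with its product with `a_{N+1}⁻¹`, spans a left vector space over
the subfield of column `l` that contains `level N`. -/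
def pivot (N l : ℕ) : K := W.dual N l * traceWeight n (W.theta N)

lemma dual_succ (N l : ℕ) : W.dual (N + 1) l = W.pivot N l * (1 - W.theta N)⁻¹ := by
  simp only [pivot, dual, weight, mul_assoc]

lemma pivot_ne_zero [NeZero n] (N l : ℕ) : W.pivot N l ≠ 0 :=
  mul_ne_zero (W.dual_ne_zero N l) (left_ne_zero_of_mul
    (traceWeight_mul_one_sub_inv_ne_zero W.isPrimitiveRoot (W.theta_pow_ne_one N)))

lemma conj_pivot_mem_colSubfield [NeZero n] (l : Fin n) (hx : x ∈ W.level (N + 1))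
    (hb : Commute (W.b (N + 1)) x) :
    W.pivot N l * x * (W.pivot N l)⁻¹ ∈ colSubfield W.embedding l := by
  have hconj := W.dual_conj_mem_colSubfield l (W.conj_one_sub_theta_mem_fixedLevel hx hb)
  simpa only [dual_succ, mul_inv_rev, inv_inv, mul_assoc,
    inv_mul_cancel_left₀ (W.one_sub_theta_ne_zero N)] using hconj

lemma exists_left_span_colSubfield [NeZero n] (l : Fin n) (hx : x ∈ W.level N) :
    ∃ s ∈ colSubfield W.embedding l, ∃ t ∈ colSubfield W.embedding l,
      s * W.pivot N l + t * (W.pivot N l * (W.a (N + 1))⁻¹) = x := by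
  set M := W.pivot N l with hM
  set c := traceWeight n (W.theta N) * (1 - (W.theta N)⁻¹)
  set y := (W.dual N l)⁻¹ * x
  have hM0 : M ≠ 0 := W.pivot_ne_zero N l
  have hy : y ∈ W.level N := mul_mem (inv_mem (W.dual_mem_level N l)) hx
  have hmem {z : K} (hz : z ∈ W.level N) :
      M * (c⁻¹ * z) * M⁻¹ ∈ colSubfield W.embedding l := by
    have hθ := W.theta_mem_level_succ N
    have hcb : Commute (W.b (N + 1)) c :=
      commute_traceWeight_mul_one_sub_inv W.isPrimitiveRoot (W.semiconjBy_theta N)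
    exact W.conj_pivot_mem_colSubfield l (mul_mem (inv_mem (mul_mem (traceWeight_mem hθ)
      (sub_mem (one_mem _) (inv_mem hθ)))) (W.level_mono N.le_succ hz))
      (hcb.inv_right₀.mul_right (W.mem_level.1 hz _ N.lt_succ_self).2)
  refine ⟨_, hmem hy, _, neg_mem (hmem (mul_mem (inv_mem (W.twist_mem_level N)) hy)), ?_⟩
  have hθinv : (W.twist N)⁻¹ * y * (W.a (N + 1))⁻¹ = (W.theta N)⁻¹ * y := by
    rw [mul_assoc, ((W.mem_level.1 hy _ N.lt_succ_self).1.inv_left₀).eq.symm, ← mul_assoc, theta,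
      (W.commute_twist_a N).eq, mul_inv_rev]
  calc M * (c⁻¹ * y) * M⁻¹ * M + -(M * (c⁻¹ * ((W.twist N)⁻¹ * y)) * M⁻¹) * (M * (W.a (N + 1))⁻¹)
      = M * (c⁻¹ * (y - (W.twist N)⁻¹ * y * (W.a (N + 1))⁻¹)) := by
        simp only [neg_mul, ← sub_eq_add_neg, mul_sub, mul_assoc, inv_mul_cancel₀ hM0, mul_one,
          inv_mul_cancel_left₀ hM0]
    _ = W.dual N l * (traceWeight n (W.theta N) * (c⁻¹ * (1 - (W.theta N)⁻¹)) * y) := by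
        rw [hθinv, ← one_sub_mul, hM, pivot]
        simp only [mul_assoc]
    _ = x := by
        rw [traceWeight_mul_inv_mul_one_sub_inv W.isPrimitiveRoot (W.theta_pow_ne_one N), one_mul,
          mul_inv_cancel_left₀ (W.dual_ne_zero N l)]

lemma aTight_embedding_pred [NeZero n] (hn : 2 ≤ n) : ATight W.embedding (n - 1) := by
  let k : Fin n := ⟨n - 2, by omega⟩
  let l : Fin n := ⟨n - 1, by omega⟩
  have hkl : (l : ℕ) = k + 1 := by simp only [k, l]; omega
  have hcol (x : K) (i : Fin n) : W.embedding (x * W.a 0) i l = W.embedding x i k := by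
    obtain ⟨N, hN⟩ := (W.eventually_mem_level x).exists
    refine Subtype.ext ?_
    rw [W.embedding_apply hN, W.embedding_apply (mul_mem hN (W.a_mem_level N.zero_le)), hkl, dual,
      dual, pow_succ, mul_inv_rev]
    simp only [mul_assoc, mul_inv_cancel_left₀ (W.a_ne_zero 0)]
  have ha : W.a 0 ∉ colSubfield W.embedding l := fun h => by
    have hentry := hcol 1 k
    rw [one_mul, h k (Fin.ne_of_lt (by simp [Fin.lt_def, hkl])), map_one,
      Matrix.one_apply_eq] at hentry
    exact zero_ne_one hentry
  refine W.aTight_embedding_self.pred_of_self (k := k) (l := l) (by simp only [k]; omega)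
    (by simp only [l]; omega) hcol fun f => ?_
  obtain ⟨N, hN⟩ := W.exists_subset_level (Set.toFinite {W.a 0, 1, f})
  obtain ⟨s, hs, t, ht, hst⟩ := exists_eq_mul_add_of_left_span_pair ha
    fun z hz => W.exists_left_span_colSubfield l (hN hz)
  exact ⟨s, t, hs, ht, hst.symm⟩

end WeylSystem

end Tower

section GeometricSeries

open HahnSeries

variable {Γ R : Type*} [AddCommMonoid Γ] [LinearOrder Γ] [IsOrderedCancelAddMonoid Γ] [Ring R]

lemma coeff_pow_nonneg {y : HahnSeries Γ ℤ} (hy : ∀ g, 0 ≤ y.coeff g) (n : ℕ) (g : Γ) :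
    0 ≤ (y ^ n).coeff g := by
  induction n generalizing g with
  | zero => rw [pow_zero, coeff_one]; split_ifs <;> simp
  | succ n ih => rw [pow_succ, coeff_mul]; exact sum_nonneg fun ij _ => mul_nonneg (ih _) (hy _)

lemma coeff_pow_pos_of_coeff_pow_ne_zero {x : HahnSeries Γ R} {y : HahnSeries Γ ℤ}
    (hy : ∀ g, 0 ≤ y.coeff g) (hxy : ∀ g, x.coeff g ≠ 0 → 0 < y.coeff g) (n : ℕ) {g : Γ}
    (h : (x ^ n).coeff g ≠ 0) : 0 < (y ^ n).coeff g := by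
  induction n generalizing g with
  | zero =>
    rw [pow_zero, coeff_one] at h ⊢
    split_ifs with hg
    · exact one_pos
    · exact absurd (if_neg hg) h
  | succ n ih =>
    rw [pow_succ, coeff_mul] at h ⊢
    obtain ⟨ij, hij, hne⟩ := exists_ne_zero_of_sum_ne_zero h
    have hi := ih (left_ne_zero_of_mul hne)
    have hj := hxy _ (right_ne_zero_of_mul hne)
    refine sum_pos' (fun _ _ => mul_nonneg (coeff_pow_nonneg hy n _) (hy _))
      ⟨ij, ?_, mul_pos hi hj⟩
    exact mem_antidiagonal.2 ⟨hi.ne', hj.ne', (mem_antidiagonal.1 hij).2.2⟩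

lemma finite_coeff_pow_ne_zero {x : HahnSeries Γ R} (hx : 0 < x.orderTop) (g : Γ) :
    {n | (x ^ n).coeff g ≠ 0}.Finite := by
  classical
  -- Positive coefficients cannot cancel, so the commutative case bounds the noncommutative one.
  let y : HahnSeries Γ ℤ :=
    ⟨fun g => if x.coeff g = 0 then 0 else 1, x.isPWO_support.mono fun g hg h => hg (if_pos h)⟩
  have hy (g : Γ) : 0 ≤ y.coeff g := ite_nonneg le_rfl zero_le_one
  have hxy (g : Γ) (hg : x.coeff g ≠ 0) : 0 < y.coeff g := by simp only [y, if_neg hg, one_pos]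
  have hy0 : 0 < y.orderTop := hx.trans_le <| le_orderTop_iff_forall.2 fun g hg =>
    if_pos (coeff_eq_zero_of_lt_orderTop hg)
  exact (SummableFamily.pow_finite_co_support hy0 g).subset fun n hn =>
    (coeff_pow_pos_of_coeff_pow_ne_zero hy hxy n hn).ne'

/-- The family of powers of a Hahn series of positive order over a possibly noncommutative ring,
to be summed to a geometric series. -/
noncomputable def powerFamily (x : HahnSeries Γ R) (hx : 0 < x.orderTop) :
    SummableFamily Γ R ℕ where
  toFun n := x ^ n
  isPWO_iUnion_support' :=
    SummableFamily.isPWO_iUnion_support_powers (zero_le_orderTop_iff.1 hx.le)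
  finite_co_support' := finite_coeff_pow_ne_zero hx

lemma one_sub_mul_hsum_powerFamily {x : HahnSeries Γ R} (hx : 0 < x.orderTop) :
    (1 - x) * (powerFamily x hx).hsum = 1 := by
  ext g
  rw [← SummableFamily.hsum_smul]
  set s := (1 - x) • powerFamily x hx
  have hs (n : ℕ) : s n = (1 - x) * x ^ n := SummableFamily.smul_apply
  obtain ⟨N, hN⟩ := ((s.finite_co_support g).union (finite_coeff_pow_ne_zero hx g)).bddAbove
  have hsum : s.hsum.coeff g = ∑ n ∈ range (N + 1), (s n).coeff g :=
    SummableFamily.coeff_hsum_eq_sum_of_subset fun n hn =>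
      mem_coe.2 <| mem_range.2 <| Nat.lt_succ_of_le <| hN <| Or.inl hn
  have hpow : (x ^ (N + 1)).coeff g = 0 := by
    by_contra h
    exact (Nat.lt_succ_self N).not_ge (hN (Or.inr h))
  simp only [hsum, hs, ← coeff_sum, ← mul_sum, mul_neg_geom_sum, coeff_sub, hpow, sub_zero]

end GeometricSeries

section GradedSeries

open HahnSeries

variable {k Γ R : Type*} [Field k] [AddCommGroup Γ] [LinearOrder Γ] [IsOrderedAddMonoid Γ] [Ring R]
  [Algebra k R]

/-- The Hahn series whose `g`-th coefficient is homogeneous of degree `g` for all `g`: the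
Mal'cev–Neumann completion of a graded ring. -/
def gradedSeries (A : Γ → Submodule k R) [SetLike.GradedMonoid A] :
    Subalgebra k (HahnSeries Γ R) where
  carrier := {x | ∀ g, x.coeff g ∈ A g}
  add_mem' hx hy g := add_mem (hx g) (hy g)
  mul_mem' {x y} hx hy g := by
    rw [coeff_mul]
    refine sum_mem fun ij hij => ?_
    rw [← (mem_antidiagonal.1 hij).2.2]
    exact SetLike.mul_mem_graded (hx _) (hy _)
  algebraMap_mem' r g := by
    rw [HahnSeries.algebraMap_apply, C_apply, coeff_single]
    split_ifs with h
    · exact h ▸ SetLike.algebraMap_mem_graded A r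
    · exact zero_mem _

variable {A : Γ → Submodule k R} [SetLike.GradedMonoid A]

lemma single_mem_gradedSeries {g : Γ} {r : R} (hr : r ∈ A g) : single g r ∈ gradedSeries A := by
  intro h
  rw [coeff_single]
  split_ifs with hgh
  · exact hgh ▸ hr
  · exact zero_mem _

lemma hsum_mem_gradedSeries {ι : Type*} {s : SummableFamily Γ R ι}
    (hs : ∀ i, s i ∈ gradedSeries A) : s.hsum ∈ gradedSeries A := fun g => by
  rw [SummableFamily.coeff_hsum_eq_sum]
  exact sum_mem fun i _ => hs i g

lemma orderTop_one_sub_mul_single_pos {x : HahnSeries Γ R} {r : R}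
    (hr : x.leadingCoeff * r = 1) : 0 < (1 - x * single (-x.order) r).orderTop := by
  have hcoeff : ∀ g ≤ 0, (1 - x * single (-x.order) r).coeff g = 0 := by
    intro g hg
    rw [coeff_sub, coeff_one, coeff_mul_single, sub_neg_eq_add]
    rcases hg.eq_or_lt with rfl | hg
    · rw [if_pos rfl, zero_add, ← leadingCoeff_eq, hr, sub_self]
    · rw [if_neg hg.ne, coeff_eq_zero_of_lt_order (add_lt_of_neg_left _ hg), zero_mul, sub_zero]
  refine lt_of_le_of_ne (le_orderTop_iff_forall.2 fun g hg => hcoeff g ?_) fun h => ?_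
  · exact WithTop.coe_le_coe.1 hg.le
  · exact coeff_orderTop_ne h.symm (hcoeff 0 le_rfl)

lemma exists_mul_eq_one_of_mem_gradedSeries
    (hA : ∀ g, ∀ r ∈ A g, r ≠ 0 → ∃ r' ∈ A (-g), r * r' = 1)
    {x : HahnSeries Γ R} (hx : x ∈ gradedSeries A) (h0 : x ≠ 0) :
    ∃ y ∈ gradedSeries A, x * y = 1 := by
  obtain ⟨r, hrA, hr⟩ := hA x.order x.leadingCoeff (leadingCoeff_eq (x := x) ▸ hx _)
    (leadingCoeff_ne_zero.2 h0)
  have hpos := orderTop_one_sub_mul_single_pos hr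
  have hw := sub_mem (one_mem _) (mul_mem hx (single_mem_gradedSeries hrA))
  refine ⟨single (-x.order) r * (powerFamily _ hpos).hsum, mul_mem (single_mem_gradedSeries hrA)
    (hsum_mem_gradedSeries fun n => pow_mem hw n), ?_⟩
  have hgeom := one_sub_mul_hsum_powerFamily hpos
  rwa [sub_sub_cancel, mul_assoc] at hgeom

lemma commute_single {g : Γ} {r : R} {x : HahnSeries Γ R} (h : ∀ g, Commute r (x.coeff g)) :
    Commute (single g r) x :=
  HahnSeries.ext <| funext fun _ => by rw [coeff_single_mul, coeff_mul_single, (h _).eq]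

end GradedSeries

section EventualCentralizer

/-- The elements commuting with all but finitely many terms of each of the sequences `c` and `d`. -/
def eventualCentralizer (k : Type*) {A : Type*} [CommRing k] [Ring A] [Algebra k A] (c d : ℕ → A) :
    Subalgebra k A where
  carrier := {x | ∀ᶠ i in Filter.atTop, Commute (c i) x ∧ Commute (d i) x}
  add_mem' hx hy := (hx.and hy).mono fun _ h =>
    ⟨h.1.1.add_right h.2.1, h.1.2.add_right h.2.2⟩
  mul_mem' hx hy := (hx.and hy).mono fun _ h =>
    ⟨h.1.1.mul_right h.2.1, h.1.2.mul_right h.2.2⟩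
  algebraMap_mem' r := .of_forall fun _ =>
    ⟨Algebra.commute_algebraMap_right r _, Algebra.commute_algebraMap_right r _⟩

variable {k A : Type*} [CommRing k] [Ring A] [Algebra k A]

lemma mem_eventualCentralizer_of_mul_eq_one {c d : ℕ → A} {x y : A} (hxy : x * y = 1)
    (hyx : y * x = 1) (hx : x ∈ eventualCentralizer k c d) : y ∈ eventualCentralizer k c d :=
  hx.mono fun _ h => ⟨h.1.units_inv_right (u := ⟨x, y, hxy, hyx⟩),
    h.2.units_inv_right (u := ⟨x, y, hxy, hyx⟩)⟩

end EventualCentralizer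

section QuantumTorus

variable {k Γ : Type*} [Field k] [AddCommGroup Γ]

/-- A family of elements of an algebra that multiply like the monomials of the quantum torus with
bicharacter `z ^ B`. -/
structure QuantumMonomials (z : kˣ) (B : Γ →ₗ[ℤ] Γ →ₗ[ℤ] ℤ) (A : Type*) [Ring A]
    [Algebra k A] where
  monomial : Γ → A
  monomial_zero : monomial 0 = 1
  monomial_mul : ∀ g h, monomial g * monomial h = ((z ^ B h g : kˣ) : k) • monomial (g + h)

/-- Translation by `g` on functions `Γ → k`, twisted by the character `z ^ B g ·`. -/
def twistedShift (z : kˣ) (B : Γ →ₗ[ℤ] Γ →ₗ[ℤ] ℤ) (g : Γ) : Module.End k (Γ → k) where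
  toFun f x := ((z ^ B g x : kˣ) : k) * f (x + g)
  map_add' _ _ := funext fun _ => mul_add _ _ _
  map_smul' _ _ := funext fun _ => mul_left_comm _ _ _

lemma twistedShift_mul (z : kˣ) (B : Γ →ₗ[ℤ] Γ →ₗ[ℤ] ℤ) (g h : Γ) :
    twistedShift z B g * twistedShift z B h =
      ((z ^ B h g : kˣ) : k) • twistedShift z B (g + h) := by
  ext f x
  change ((z ^ B g x : kˣ) : k) * ((z ^ B h (x + g) : kˣ) * f (x + g + h)) =
    (z ^ B h g : kˣ) * ((z ^ B (g + h) x : kˣ) * f (x + (g + h)))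
  simp only [map_add, LinearMap.add_apply, zpow_add, Units.val_mul, add_assoc]
  ring

/-- The representation of the quantum torus by twisted shifts, which provides quantum monomials
for every bicharacter. -/
def QuantumMonomials.shift (z : kˣ) (B : Γ →ₗ[ℤ] Γ →ₗ[ℤ] ℤ) :
    QuantumMonomials z B (Module.End k (Γ → k)) where
  monomial := twistedShift z B
  monomial_zero := by ext f x; simp [twistedShift]
  monomial_mul := twistedShift_mul z B

namespace QuantumMonomials

variable {A : Type*} [Ring A] [Algebra k A] {z : kˣ} {B : Γ →ₗ[ℤ] Γ →ₗ[ℤ] ℤ}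
  (T : QuantumMonomials z B A)

lemma monomial_mul_neg (g : Γ) :
    T.monomial g * T.monomial (-g) = ((z ^ B (-g) g : kˣ) : k) • 1 := by
  rw [T.monomial_mul, add_neg_cancel, T.monomial_zero]

lemma monomial_ne_zero [Nontrivial A] (g : Γ) : T.monomial g ≠ 0 :=
  left_ne_zero_of_mul <| T.monomial_mul_neg g ▸ smul_ne_zero (Units.ne_zero _) one_ne_zero

lemma semiconjBy_monomial (g h : Γ) :
    SemiconjBy (T.monomial g) (T.monomial h)
      (((z ^ (B h g - B g h) : kˣ) : k) • T.monomial h) := by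
  rw [SemiconjBy, smul_mul_assoc, T.monomial_mul, T.monomial_mul, smul_smul, add_comm h g,
    ← Units.val_mul, ← zpow_add, sub_add_cancel]

lemma commute_monomial {g h : Γ} (hgh : B g h = B h g) :
    Commute (T.monomial g) (T.monomial h) := by
  have h := T.semiconjBy_monomial g h
  rwa [hgh, sub_self, zpow_zero, Units.val_one, one_smul] at h

lemma commute_monomial_pow {n : ℕ} (hz : z ^ n = 1) (g h : Γ) :
    Commute (T.monomial g ^ n) (T.monomial h) := by
  have hpow := semiconjBy_pow_smul (T.semiconjBy_monomial g h) n
  rwa [← Units.val_pow_eq_pow_val, ← zpow_natCast, zpow_comm, zpow_natCast, hz, one_zpow,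
    Units.val_one, one_smul] at hpow

/-- The homogeneous component of degree `g` of the quantum torus. -/
def line (g : Γ) : Submodule k A :=
  Submodule.span k {T.monomial g}

lemma monomial_mem_line (g : Γ) : T.monomial g ∈ T.line g :=
  Submodule.mem_span_singleton_self _

instance : SetLike.GradedMonoid T.line where
  one_mem := T.monomial_zero ▸ T.monomial_mem_line 0
  mul_mem g h x y hx hy := by
    obtain ⟨r, rfl⟩ := Submodule.mem_span_singleton.1 hx
    obtain ⟨s, rfl⟩ := Submodule.mem_span_singleton.1 hy
    rw [smul_mul_smul_comm, T.monomial_mul]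
    exact Submodule.smul_mem _ _ (Submodule.smul_mem _ _ (T.monomial_mem_line _))

lemma exists_mul_eq_one_of_mem_line (g : Γ) {x : A} (hx : x ∈ T.line g) (h0 : x ≠ 0) :
    ∃ y ∈ T.line (-g), x * y = 1 := by
  obtain ⟨r, rfl⟩ := Submodule.mem_span_singleton.1 hx
  have hr : r ≠ 0 := fun h => h0 (by rw [h, zero_smul])
  refine ⟨(r * ((z ^ B (-g) g : kˣ) : k))⁻¹ • T.monomial (-g),
    Submodule.smul_mem _ _ (T.monomial_mem_line _), ?_⟩
  rw [smul_mul_smul_comm, T.monomial_mul_neg, smul_smul, mul_right_comm,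
    mul_inv_cancel₀ (mul_ne_zero hr (Units.ne_zero _)), one_smul]

end QuantumMonomials

end QuantumTorus

namespace QuantumMonomials

open HahnSeries

variable {k Γ A : Type*} [Field k] [AddCommGroup Γ] [LinearOrder Γ] [IsOrderedAddMonoid Γ]
  [Ring A] [Algebra k A] {z : kˣ} {B : Γ →ₗ[ℤ] Γ →ₗ[ℤ] ℤ} (T : QuantumMonomials z B A)

/-- Quantum monomials as Hahn series, graded by their exponents. -/
noncomputable def hahn : QuantumMonomials z B (HahnSeries Γ A) where
  monomial g := single g (T.monomial g)
  monomial_zero := by rw [T.monomial_zero, single_zero_one]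
  monomial_mul g h := by
    rw [single_mul_single, T.monomial_mul]
    exact (single.linearMap (g + h)).map_smul _ _

lemma commute_hahn_pow {n : ℕ} (hz : z ^ n = 1) (g : Γ) {x : HahnSeries Γ A}
    (hx : x ∈ gradedSeries T.line) : Commute (T.hahn.monomial g ^ n) x := by
  rw [hahn, single_pow]
  refine commute_single fun h => ?_
  obtain ⟨r, hr⟩ := Submodule.mem_span_singleton.1 (hx h)
  exact hr ▸ (T.commute_monomial_pow hz g h).smul_right r

lemma hahn_pow_mul_pow_ne_one [Nontrivial A] {n : ℕ} (hn : n ≠ 0) {g h : Γ} (hgh : g + h ≠ 0) :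
    T.hahn.monomial g ^ n * T.hahn.monomial h ^ n ≠ 1 := by
  have hdeg : 0 ≠ n • g + n • h := fun h0 =>
    hgh ((nsmul_eq_zero_iff_right hn).1 (nsmul_add g h n ▸ h0.symm))
  rw [hahn, single_pow, single_pow, single_mul_single]
  intro h1
  have hcoeff := congr_arg (fun x => x.coeff 0) h1
  simp only [coeff_single_of_ne hdeg, coeff_one, if_pos] at hcoeff
  exact zero_ne_one hcoeff

/-- The graded series commuting with the monomials of exponents `α i` and `β i` for almost all
`i`. -/
noncomputable def finitarySeries (α β : ℕ → Γ) : Subalgebra k (HahnSeries Γ A) :=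
  gradedSeries T.line ⊓
    eventualCentralizer k (fun i => T.hahn.monomial (α i)) fun i => T.hahn.monomial (β i)

variable {α β : ℕ → Γ}

lemma isUnit_or_eq_zero_finitarySeries [Nontrivial A] (x : T.finitarySeries α β) :
    IsUnit x ∨ x = 0 := by
  refine or_iff_not_imp_right.2 fun h0 => ?_
  have hinv {x} := exists_mul_eq_one_of_mem_gradedSeries (x := x)
    fun g _ => T.exists_mul_eq_one_of_mem_line g
  obtain ⟨y, hy, hxy⟩ := hinv x.2.1 (Subtype.coe_ne_coe.2 h0)
  obtain ⟨w, -, hyw⟩ := hinv hy (right_ne_zero_of_mul_eq_one hxy)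
  have hyx : y * x = 1 := left_inv_eq_right_inv hxy hyw ▸ hyw
  exact ⟨⟨x, ⟨y, hy, mem_eventualCentralizer_of_mul_eq_one hxy hyx x.2.2⟩, Subtype.ext hxy,
    Subtype.ext hyx⟩, rfl⟩

noncomputable instance [Nontrivial A] : DivisionRing (T.finitarySeries α β) :=
  .ofIsUnitOrEqZero T.isUnit_or_eq_zero_finitarySeries

lemma hahn_monomial_mem_finitarySeries {g : Γ}
    (hα : ∀ᶠ i in Filter.atTop, B (α i) g = B g (α i))
    (hβ : ∀ᶠ i in Filter.atTop, B (β i) g = B g (β i)) :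
    T.hahn.monomial g ∈ T.finitarySeries α β :=
  ⟨single_mem_gradedSeries (T.monomial_mem_line g), (hα.and hβ).mono fun _ h =>
    ⟨T.hahn.commute_monomial h.1, T.hahn.commute_monomial h.2⟩⟩

/-- A Weyl system of monomials, from exponents that are symplectic for the commutator form
`B g h - B h g`. -/
noncomputable def weylSystem [Nontrivial A] {n : ℕ} [NeZero n] (hz : IsPrimitiveRoot (z : k) n)
    (hαα : ∀ i j, B (α i) (α j) = B (α j) (α i)) (hββ : ∀ i j, B (β i) (β j) = B (β j) (β i))
    (hαβ : ∀ i j, B (α i) (β j) = B (β j) (α i) + if i = j then 1 else 0) :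
    WeylSystem n (z : k) (T.finitarySeries α β) :=
  have hne (i j : ℕ) (hij : i ≠ j) : B (α i) (β j) = B (β j) (α i) := by simp [hαβ, hij]
  { a := fun i => ⟨T.hahn.monomial (α i), T.hahn_monomial_mem_finitarySeries
      (.of_forall fun j => hαα j i)
      ((Filter.eventually_ne_atTop i).mono fun j hj => (hne i j hj.symm).symm)⟩
    b := fun i => ⟨T.hahn.monomial (β i), T.hahn_monomial_mem_finitarySeries
      ((Filter.eventually_ne_atTop i).mono fun j hj => hne j i hj)
      (.of_forall fun j => hββ j i)⟩
    isPrimitiveRoot := hz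
    a_ne_zero := fun i h => T.hahn.monomial_ne_zero (α i) (congr_arg Subtype.val h)
    b_ne_zero := fun i h => T.hahn.monomial_ne_zero (β i) (congr_arg Subtype.val h)
    semiconjBy := fun i => Subtype.ext <| by
      have h := T.hahn.semiconjBy_monomial (β i) (α i)
      rwa [hαβ, if_pos rfl, add_sub_cancel_left, zpow_one] at h
    commute_a := fun i j => Subtype.ext (T.hahn.commute_monomial (hαα i j))
    commute_b := fun i j => Subtype.ext (T.hahn.commute_monomial (hββ i j))
    commute_a_b := fun i j hij => Subtype.ext (T.hahn.commute_monomial (hne i j hij))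
    commute_b_pow := fun i x => Subtype.ext <|
      T.commute_hahn_pow (Units.ext (by simpa using hz.pow_eq_one)) (β i) x.2.1
    pow_mul_pow_ne_one := fun i h => by
      refine T.hahn_pow_mul_pow_ne_one (NeZero.ne n) (fun h0 => ?_) (congr_arg Subtype.val h)
      have h1 := hαα i (i + 1)
      have h2 := hαβ i i
      have h3 := congr_arg (B (α i)) h0
      have h4 := LinearMap.congr_fun (congr_arg B h0) (α i)
      simp only [map_add, LinearMap.add_apply, map_zero, LinearMap.zero_apply, if_pos] at h2 h3 h4
      omega
    eventually_commute := fun x => x.2.2.mono fun _ h =>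
      ⟨Subtype.ext h.1, Subtype.ext h.2⟩ }

end QuantumMonomials

section Existence

/-- The bilinear form on finitely supported exponents with Gram matrix `c`. -/
noncomputable def exponentForm {ι : Type*} (c : ι → ι → ℤ) :
    Lex (ι →₀ ℤ) →ₗ[ℤ] Lex (ι →₀ ℤ) →ₗ[ℤ] ℤ :=
  (Finsupp.linearCombination ℤ fun i => Finsupp.linearCombination ℤ (c i)).compl₁₂
    (ofLexLinearEquiv ℤ _).toLinearMap (ofLexLinearEquiv ℤ _).toLinearMap

lemma exponentForm_single {ι : Type*} (c : ι → ι → ℤ) (i j : ι) :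
    exponentForm c (toLex (Finsupp.single i 1)) (toLex (Finsupp.single j 1)) = c i j := by
  change Finsupp.linearCombination ℤ (fun i => Finsupp.linearCombination ℤ (c i))
    (Finsupp.single i 1) (Finsupp.single j 1) = c i j
  simp only [Finsupp.linearCombination_single, one_smul, smul_eq_mul, one_mul]

/-- The Gram matrix of the exponents of `a₀, a₁, …` (left summand) and `b₀, b₁, …` (right summand):
its antisymmetrization is the standard symplectic form. -/
def pairingMatrix (i j : ℕ ⊕ₗ ℕ) : ℤ :=
  match ofLex i, ofLex j with
  | .inl l, .inr r => if l = r then 1 else 0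
  | _, _ => 0

lemma exists_weylSystem (n : ℕ) [NeZero n] :
    ∃ (K : Type) (_ : DivisionRing K) (_ : Algebra ℂ K) (ζ : ℂ), Nonempty (WeylSystem n ζ K) := by
  have hζ := Complex.isPrimitiveRoot_exp n (NeZero.ne n)
  obtain ⟨z, hz⟩ := hζ.isUnit (NeZero.ne n)
  refine ⟨_, _, _, z, ⟨(QuantumMonomials.shift z (exponentForm pairingMatrix)).weylSystem
    (α := fun i => toLex (Finsupp.single (Sum.inlₗ i) 1))
    (β := fun i => toLex (Finsupp.single (Sum.inrₗ i) 1)) (hz ▸ hζ) ?_ ?_ ?_⟩⟩ <;>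
  intro i j <;> simp only [exponentForm_single] <;> simp [pairingMatrix]

end Existence

theorem stmt7_general (n : ℕ) (h1 : 1 ≤ n) :
    ∃ (F G : Type) (_ : DivisionRing F) (_ : DivisionRing G) (φ : F →+* Matrix (Fin n) (Fin n) G),
      Function.Injective φ ∧
        ∀ a, 1 ≤ a → a ≤ n → (a ≤ 2 ∨ n ≤ a + 1) → ATight φ a := by
  have : NeZero n := ⟨Nat.one_le_iff_ne_zero.1 h1⟩
  obtain ⟨K, _, _, ζ, ⟨W⟩⟩ := exists_weylSystem n
  refine ⟨K, W.base, _, _, W.embedding, W.embedding.injective, fun a ha han hedge => ?_⟩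
  obtain rfl | rfl | ⟨rfl, hn⟩ | ⟨rfl, hn⟩ :
      a = 1 ∨ a = n ∨ (a = 2 ∧ 2 ≤ n) ∨ (a = n - 1 ∧ 2 ≤ n) := by omega
  · exact W.aTight_embedding_one
  · exact W.aTight_embedding_self
  · exact W.aTight_embedding_two hn
  · exact W.aTight_embedding_pred hn

/-- For every positive integer `n ≤ 4` there exist division rings `F` and `G` and a
tight ring embedding `F → Mₙ(G)`. -/
theorem stmt7 (n : ℕ) (h1 : 1 ≤ n) (h4 : n ≤ 4) : Nonempty (TightPair n) := by
  obtain ⟨F, G, _, _, φ, hφ, htight⟩ := stmt7_general n h1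
  exact ⟨⟨F, G, φ, hφ, fun a ha han => htight a ha han (by omega)⟩⟩
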